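/- Let n ≥ 3. Consider the curve-germ with semigroup (3,7,11) in ℝ^{2n} (coordinates (p₁,q₁,p₂,q₂,p₃,q₃,…,pₙ,qₙ), all unlisted coordinates equal to 0) f(t) = (t³, t¹⁰, t⁷, 0, t¹¹, 0, …, 0). Then Lt(f) = 10. -/

import Mathlib

noncomputable section

/-- The order of vanishing at `0` of a function `h : ℝ → ℝ`: the least `k ≥ 1` such that
the `k`-th derivative of `h` at `0` is nonzero, and `∞` if all derivatives vanish at `0`. -/
def vanishOrder (h : ℝ → ℝ) : ℕ∞ :=
  sInf {k : ℕ∞ | ∃ m : ℕ, k = m ∧ 1 ≤ m ∧ iteratedDeriv m h 0 ≠ 0}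

/-- The standard symplectic form `ω = ∑ dpᵢ ∧ dqᵢ` on `ℝ^{2n}`, where the coordinates are
ordered as `(p₁, q₁, …, pₙ, qₙ)` (so `pᵢ` has index `2(i-1)` and `qᵢ` has index `2(i-1)+1`). -/
def stdSymp (n : ℕ) (u v : Fin (2 * n) → ℝ) : ℝ :=
  ∑ i : Fin n,
    (u ⟨2 * i.val, by have := i.isLt; omega⟩ * v ⟨2 * i.val + 1, by have := i.isLt; omega⟩ -
     u ⟨2 * i.val + 1, by have := i.isLt; omega⟩ * v ⟨2 * i.val, by have := i.isLt; omega⟩)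

/-- A germ at `0` of a smooth Lagrangian submanifold of `(ℝ^{2n}, ω)`, given by `n` smooth
functions `H₁, …, Hₙ` vanishing at `0`, whose differentials are linearly independent at the
points of `{H₁ = ⋯ = Hₙ = 0}` near `0`, and such that `ω` vanishes on `ker DH(x)` at every
such point. -/
structure LagrangianGerm (n : ℕ) : Type where
  H : Fin n → (Fin (2 * n) → ℝ) → ℝ
  smooth : ∀ i, ContDiff ℝ (⊤ : ℕ∞) (H i)
  zero_at_zero : ∀ i, H i 0 = 0
  lagrangian : ∃ U : Set (Fin (2 * n) → ℝ), IsOpen U ∧ 0 ∈ U ∧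
    ∀ x ∈ U, (∀ i, H i x = 0) →
      LinearIndependent ℝ (fun i => fderiv ℝ (H i) x) ∧
      ∀ u v : Fin (2 * n) → ℝ, (∀ i, fderiv ℝ (H i) x u = 0) →
        (∀ i, fderiv ℝ (H i) x v = 0) → stdSymp n u v = 0

/-- The tangency order `t(f, L)` of a curve `f` to a Lagrangian submanifold-germ `L`:
the minimum over `i` of the order of vanishing at `0` of `Hᵢ ∘ f`. -/
def tOrd {n : ℕ} (f : ℝ → Fin (2 * n) → ℝ) (L : LagrangianGerm n) : ℕ∞ :=
  ⨅ i : Fin n, vanishOrder (fun t => L.H i (f t))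

/-- The Lagrangian tangency order `Lt(f)` of a curve `f`. -/
def Lt1 {n : ℕ} (f : ℝ → Fin (2 * n) → ℝ) : ℕ∞ :=
  ⨆ L : LagrangianGerm n, tOrd f L

/-- The Lagrangian tangency order `Lt(f, g)` of a multi-germ of two curves. -/
def Lt2 {n : ℕ} (f g : ℝ → Fin (2 * n) → ℝ) : ℕ∞ :=
  ⨆ L : LagrangianGerm n, min (tOrd f L) (tOrd g L)

/-- The Lagrangian tangency order `Lt(f, g, h)` of a multi-germ of three curves. -/
def Lt3 {n : ℕ} (f g h : ℝ → Fin (2 * n) → ℝ) : ℕ∞ :=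
  ⨆ L : LagrangianGerm n, min (tOrd f L) (min (tOrd g L) (tOrd h L))

/-!
Let `f t = t ^ a • u + t ^ b • v + t ^ (a + b) • w + o(t ^ (a + b))` with `a < b` and `a ∤ b`, and
suppose that the map `H` defining a Lagrangian germ satisfies `H (f t) = o(t ^ (a + b))`. The Taylor
expansion of `H (t ^ a • u)` only involves exponents divisible by `a`, so comparing coefficients
gives `DH u = DH v = 0`, `D²H(u, u) = 0` and `D²H(u, v) + DH w = 0` at `0`. These are the equations
saying that, moving along the germ with velocity `u`, the tangent vectors `u` and `v` can be
extended to fields of tangent vectors with derivatives `0` and `w`. Differentiating `ω = 0` along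
this pair of fields yields `ω(u, w) = 0`. For the curve at hand `a = 3`, `b = 7`, `u = ∂/∂p₁`,
`v = ∂/∂p₂` and `w = ∂/∂q₁`, so `ω(u, w) = 1` and the tangency order never exceeds `10`; the
subspace `q₁ = ⋯ = qₙ = 0` attains it.
-/

open Filter Topology Asymptotics Function

section Asymptotics

open scoped Nat

variable {E F : Type*} [NormedAddCommGroup E] [NormedSpace ℝ E]
  [NormedAddCommGroup F] [NormedSpace ℝ F]

theorem pow_smul_const_isBigO (k : ℕ) (c : F) :
    (fun t : ℝ => t ^ k • c) =O[𝓝 0] fun t => t ^ k :=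
  .of_bound ‖c‖ <| .of_forall fun t => by rw [norm_smul, mul_comm]

theorem pow_smul_const_isLittleO {k m : ℕ} (h : m < k) (c : F) :
    (fun t : ℝ => t ^ k • c) =o[𝓝 0] fun t => t ^ m :=
  (pow_smul_const_isBigO k c).trans_isLittleO (isLittleO_pow_pow h)

theorem pow_isBigO_pow {k m : ℕ} (h : m ≤ k) :
    (fun t : ℝ => t ^ k) =O[𝓝 0] fun t => t ^ m :=
  h.eq_or_lt.elim (fun h => h ▸ isBigO_refl _ _) fun h => (isLittleO_pow_pow h).isBigO

theorem eq_zero_of_pow_smul_const_isLittleO {k : ℕ} {c : F}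
    (h : (fun t : ℝ => t ^ k • c) =o[𝓝 0] fun t => t ^ k) : c = 0 := by
  have hdiv := (isBigO_refl (fun t : ℝ => (t ^ k)⁻¹) (𝓝[≠] 0)).smul_isLittleO
    (h.mono nhdsWithin_le_nhds)
  have hne : ∀ᶠ t : ℝ in 𝓝[≠] 0, t ^ k ≠ 0 :=
    eventually_mem_nhdsWithin.mono fun t ht => pow_ne_zero k ht
  refine (isLittleO_const_const_iff (l := 𝓝[≠] (0 : ℝ)) (c := (1 : ℝ))).1 ?_
  refine hdiv.congr' (hne.mono fun t ht => ?_) (hne.mono fun t ht => ?_)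
  · exact inv_smul_smul₀ ht c
  · exact inv_mul_cancel₀ ht

theorem eq_zero_of_sum_pow_smul_isLittleO {ι : Type*} [Fintype ι] {e : ι → ℕ} (he : Injective e)
    {c : ι → F} {n : ℕ} (h : (fun t : ℝ => ∑ i, t ^ e i • c i) =o[𝓝 0] fun t => t ^ n)
    (i : ι) (hi : e i ≤ n) : c i = 0 := by
  classical
  induction hk : e i using Nat.strong_induction_on generalizing i with
  | _ k ih =>
    subst hk
    have hother : ∀ j ∈ Finset.univ.erase i,
        (fun t : ℝ => t ^ e j • c j) =o[𝓝 0] fun t => t ^ e i := by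
      intro j hj
      rcases (he.ne (Finset.ne_of_mem_erase hj)).lt_or_gt with hlt | hgt
      · simp [ih (e j) hlt j (hlt.le.trans hi) rfl]
      · exact pow_smul_const_isLittleO hgt _
    apply eq_zero_of_pow_smul_const_isLittleO (k := e i)
    refine ((h.trans_isBigO (pow_isBigO_pow hi)).sub (IsLittleO.fun_sum hother)).congr_left
      fun t => ?_
    rw [← Finset.add_sum_erase _ _ (Finset.mem_univ i), add_sub_cancel_right]

theorem sub_taylor_sum_isLittleO {g : ℝ → F} {n : ℕ} (hg : ContDiff ℝ n g) :
    (fun s => g s - ∑ k : Fin (n + 1), s ^ (k : ℕ) • ((k ! : ℝ)⁻¹ • iteratedDeriv k g 0))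
      =o[𝓝 0] fun s => s ^ n := by
  refine (taylor_isLittleO_univ hg (x₀ := 0)).congr (fun s => ?_) fun s => by rw [sub_zero]
  simp only [taylor_within_apply, sub_zero, iteratedDerivWithin_univ, mul_comm, mul_smul,
    Finset.sum_range]

theorem comp_pow_sub_taylor_sum_isLittleO {g : ℝ → F} {n a : ℕ} (hg : ContDiff ℝ n g)
    (ha : 0 < a) :
    (fun t => g (t ^ a) - ∑ k : Fin (n + 1), t ^ (a * k) • ((k ! : ℝ)⁻¹ • iteratedDeriv k g 0))
      =o[𝓝 0] fun t => t ^ n := by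
  have hpow : Tendsto (fun t : ℝ => t ^ a) (𝓝 0) (𝓝 0) := by
    simpa [ha.ne'] using (continuous_pow a).tendsto (0 : ℝ)
  refine IsLittleO.trans_isBigO ?_ (pow_isBigO_pow (Nat.le_mul_of_pos_left n ha))
  simpa only [comp_def, pow_mul] using (sub_taylor_sum_isLittleO hg).comp_tendsto hpow

theorem sub_sub_fderiv_isBigO_sq {G : E → F} {x₀ : E} (hG : ContDiffAt ℝ 2 G x₀) :
    (fun p : E × E => G p.1 - G p.2 - fderiv ℝ G p.2 (p.1 - p.2)) =O[𝓝 (x₀, x₀)]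
      fun p => ‖p.1 - p.2‖ ^ 2 := by
  obtain ⟨K, s, hs, hK⟩ :=
    (hG.fderiv_right (m := 1) one_add_one_eq_two.le).exists_lipschitzOnWith
  have hdiff : ∀ᶠ y in 𝓝 x₀, DifferentiableAt ℝ G y :=
    (hG.eventually (by simp)).mono fun y hy => hy.differentiableAt (by simp)
  obtain ⟨r, hr, hball⟩ := Metric.mem_nhds_iff.1 (inter_mem hs hdiff)
  have hnhds : Metric.ball x₀ r ×ˢ Metric.ball x₀ r ∈ 𝓝 (x₀, x₀) :=
    prod_mem_nhds (Metric.ball_mem_nhds _ hr) (Metric.ball_mem_nhds _ hr)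
  refine .of_bound K ?_
  filter_upwards [hnhds] with ⟨y, x⟩ ⟨hy, hx⟩
  have hseg : segment ℝ x y ⊆ Metric.ball x₀ r := (convex_ball x₀ r).segment_subset hx hy
  have hderiv : ∀ z ∈ segment ℝ x y, ‖fderiv ℝ G z - fderiv ℝ G x‖ ≤ K * ‖y - x‖ := fun z hz =>
    (hK.norm_sub_le (hball (hseg hz)).1 (hball hx).1).trans <| by
      gcongr
      exact norm_sub_le_of_mem_segment hz
  have hmean := (convex_segment x y).norm_image_sub_le_of_norm_fderiv_le' (𝕜 := ℝ)
    (fun z hz => (hball (hseg hz)).2) hderiv (left_mem_segment ℝ x y) (right_mem_segment ℝ x y)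
  rwa [norm_pow, norm_norm, sq, ← mul_assoc]

theorem add_sub_fderiv_sub_fderiv_fderiv_isLittleO {α : Type*} {l : Filter α} {G : E → F} {x₀ : E}
    (hG : ContDiffAt ℝ 2 G x₀) {x h : α → E} {ρ σ : α → ℝ} (hx : (x · - x₀) =O[l] ρ)
    (hh : h =O[l] σ) (hσρ : σ =o[l] ρ) (hρ : Tendsto ρ l (𝓝 0)) :
    (fun t => G (x t + h t) - G (x t) -
        (fderiv ℝ G x₀ (h t) + fderiv ℝ (fderiv ℝ G) x₀ (x t - x₀) (h t)))
      =o[l] fun t => ρ t * σ t := by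
  have hx₀ : Tendsto x l (𝓝 x₀) := by
    simpa using (hx.trans_tendsto hρ).add_const x₀
  have hh₀ : Tendsto h l (𝓝 0) := (hh.trans_isLittleO hσρ).isBigO.trans_tendsto hρ
  have hsq : (fun t => G (x t + h t) - G (x t) - fderiv ℝ G (x t) (h t))
      =o[l] fun t => ρ t * σ t := by
    have hpair : Tendsto (fun t => (x t + h t, x t)) l (𝓝 (x₀, x₀)) := by
      simpa using (hx₀.add hh₀).prodMk_nhds hx₀
    have hO := (sub_sub_fderiv_isBigO_sq hG).comp_tendsto hpair
    simp only [comp_def, add_sub_cancel_left, sq] at hO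
    exact (hO.trans (hh.norm_left.mul hh.norm_left)).trans_isLittleO
      (hσρ.mul_isBigO (isBigO_refl σ l))
  have hDG : HasFDerivAt (fderiv ℝ G) (fderiv ℝ (fderiv ℝ G) x₀) x₀ :=
    ((hG.fderiv_right (m := 1) one_add_one_eq_two.le).differentiableAt one_ne_zero).hasFDerivAt
  have hlin : (fun t => (fderiv ℝ G (x t) - fderiv ℝ G x₀ -
      fderiv ℝ (fderiv ℝ G) x₀ (x t - x₀)) (h t)) =o[l] fun t => ρ t * σ t := by
    have ho := (hDG.isLittleO.comp_tendsto hx₀).trans_isBigO hx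
    exact (IsBigO.of_norm_le fun t => ContinuousLinearMap.le_opNorm _ _).trans_isLittleO
      (ho.norm_left.mul_isBigO hh.norm_left)
  refine (hsq.add hlin).congr_left fun t => ?_
  simp only [sub_apply]
  abel

theorem deriv_comp_smul_const {G : E → F} (hG : Differentiable ℝ G) (u : E) :
    deriv (fun s : ℝ => G (s • u)) = fun s => fderiv ℝ G (s • u) u := by
  funext s
  have hline : HasDerivAt (fun s : ℝ => s • u) u s := by
    simpa using (hasDerivAt_id s).smul_const u
  exact ((hG (s • u)).hasFDerivAt.comp_hasDerivAt s hline).deriv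

theorem iteratedDeriv_two_comp_smul_const {G : E → F} (hG : ContDiff ℝ 2 G) (u : E) :
    iteratedDeriv 2 (fun s : ℝ => G (s • u)) 0 = fderiv ℝ (fderiv ℝ G) 0 u u := by
  have hDG : Differentiable ℝ (fderiv ℝ G) :=
    (hG.fderiv_right (m := 1) one_add_one_eq_two.le).differentiable one_ne_zero
  rw [iteratedDeriv_succ, iteratedDeriv_one, deriv_comp_smul_const (hG.differentiable two_ne_zero),
    deriv_comp_smul_const (G := fun x => fderiv ℝ G x u) (by fun_prop)]
  simp [fderiv_clm_apply, hDG.differentiableAt]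

theorem sumElim_mul_injective {a b N : ℕ} (ha : 0 < a) (hdvd : ¬a ∣ b) :
    Injective (Sum.elim (fun k : Fin N => a * (k : ℕ)) ![b, a + b]) := by
  have hne : ∀ (k : Fin N) (j : Fin 2), a * (k : ℕ) ≠ ![b, a + b] j := by
    intro k j hkj
    fin_cases j
    · exact hdvd ⟨k, hkj.symm⟩
    · exact hdvd (Nat.dvd_add_self_left.1 ⟨k, hkj.symm⟩)
  have hpair : Injective ![b, a + b] := by
    intro i j hij
    fin_cases i <;> fin_cases j <;> simp_all
  exact Injective.sumElim (fun k l hkl => Fin.ext (Nat.eq_of_mul_eq_mul_left ha hkl)) hpair hne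

/-- The curve `f` has the `(a + b)`-jet `t ^ a • u + t ^ b • v + t ^ (a + b) • w` at `0`.
For such a curve, tangency to a Lagrangian germ beyond order `a + b` constrains `ω(u, w)`. The jet
is encoded as an asymptotic expansion, so no smoothness of `f` is included. -/
def HasThreeTermJet (f : ℝ → E) (a b : ℕ) (u v w : E) : Prop :=
  (fun t => f t - (t ^ a • u + t ^ b • v + t ^ (a + b) • w)) =o[𝓝 0] fun t => t ^ (a + b)

namespace HasThreeTermJet

variable {f : ℝ → E} {a b : ℕ} {u v w : E}

theorem apply_zero (hf : HasThreeTermJet f a b u v w) (ha : 0 < a) (hb : 0 < b) : f 0 = 0 := by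
  have h₀ := IsBigO.eq_zero_of_norm_pow (x₀ := (0 : ℝ)) (n := a + b)
    (by simpa [HasThreeTermJet] using hf.isBigO.norm_right) (by omega)
  simpa [ha.ne', hb.ne'] using h₀

theorem sub_leading_isBigO (hf : HasThreeTermJet f a b u v w) :
    (fun t => f t - t ^ a • u) =O[𝓝 0] fun t => t ^ b := by
  have hb : b ≤ a + b := Nat.le_add_left b a
  have hO := (hf.isBigO.trans (pow_isBigO_pow hb)).add <|
    (pow_smul_const_isBigO b v).add ((pow_smul_const_isBigO (a + b) w).trans (pow_isBigO_pow hb))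
  exact hO.congr_left fun t => by abel

theorem comp_sub_isLittleO (hf : HasThreeTermJet f a b u v w) (ha : 0 < a) (hab : a < b)
    {G : E → F} (hG : ContDiffAt ℝ 2 G 0) :
    (fun t => G (f t) - (G (t ^ a • u) + (t ^ b • fderiv ℝ G 0 v +
        t ^ (a + b) • (fderiv ℝ (fderiv ℝ G) 0 u v + fderiv ℝ G 0 w))))
      =o[𝓝 0] fun t => t ^ (a + b) := by
  have hpow : Tendsto (fun t : ℝ => t ^ a) (𝓝 0) (𝓝 0) := by
    simpa [ha.ne'] using (continuous_pow a).tendsto (0 : ℝ)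
  have hTaylor := add_sub_fderiv_sub_fderiv_fderiv_isLittleO hG (x := fun t => t ^ a • u)
    (by simpa using pow_smul_const_isBigO a u) hf.sub_leading_isBigO (isLittleO_pow_pow hab) hpow
  have hlin := ((fderiv ℝ G 0).isBigO_comp _ _).trans_isLittleO hf
  have htail : (fun t => f t - t ^ a • u - t ^ b • v) =O[𝓝 0] fun t => t ^ (a + b) :=
    (hf.isBigO.add (pow_smul_const_isBigO (a + b) w)).congr_left fun t => by abel
  have hquad : (fun t => t ^ a • fderiv ℝ (fderiv ℝ G) 0 u (f t - t ^ a • u - t ^ b • v))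
      =o[𝓝 0] fun t => t ^ (a + b) := by
    have ho := ((isLittleO_one_iff ℝ).2 hpow).smul_isBigO
      (((fderiv ℝ (fderiv ℝ G) 0 u).isBigO_comp _ _).trans htail)
    simpa only [one_smul] using ho
  simp only [← pow_add] at hTaylor
  refine ((hTaylor.add hlin).add hquad).congr_left fun t => ?_
  simp only [map_add, map_sub, map_smul, smul_apply, sub_zero, add_sub_cancel, pow_add]
  module

theorem fderiv_eq_zero_of_comp_isLittleO (hf : HasThreeTermJet f a b u v w) (ha : 0 < a)
    (hab : a < b) (hdvd : ¬a ∣ b) {G : E → F} (hG : ContDiff ℝ (a + b : ℕ) G)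
    (hGf : (G ∘ f) =o[𝓝 0] fun t => t ^ (a + b)) :
    fderiv ℝ G 0 u = 0 ∧ fderiv ℝ G 0 v = 0 ∧ fderiv ℝ (fderiv ℝ G) 0 u u = 0 ∧
      fderiv ℝ (fderiv ℝ G) 0 u v + fderiv ℝ G 0 w = 0 := by
  have hG₂ : ContDiff ℝ 2 G := hG.of_le (by norm_cast; omega)
  have hline : ContDiff ℝ (a + b : ℕ) fun s : ℝ => G (s • u) := hG.comp (by fun_prop)
  let e : Fin (a + b + 1) ⊕ Fin 2 → ℕ := Sum.elim (fun k => a * k) ![b, a + b]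
  let c : Fin (a + b + 1) ⊕ Fin 2 → F :=
    Sum.elim (fun k => (k ! : ℝ)⁻¹ • iteratedDeriv k (fun s : ℝ => G (s • u)) 0)
      ![fderiv ℝ G 0 v, fderiv ℝ (fderiv ℝ G) 0 u v + fderiv ℝ G 0 w]
  have hsum : (fun t : ℝ => ∑ i, t ^ e i • c i) =o[𝓝 0] fun t => t ^ (a + b) := by
    refine ((hGf.sub (hf.comp_sub_isLittleO ha hab hG₂.contDiffAt)).sub
      (comp_pow_sub_taylor_sum_isLittleO hline ha)).congr_left fun t => ?_
    simp only [e, c, Fintype.sum_sum_type, Fin.sum_univ_two, Sum.elim_inl, Sum.elim_inr,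
      Matrix.cons_val_zero, Matrix.cons_val_one, comp_apply]
    abel
  -- As `a ∤ b`, the multiples of `a` coming from `G (t ^ a • u)` miss both `b` and `a + b`.
  have hc := eq_zero_of_sum_pow_smul_isLittleO (sumElim_mul_injective ha hdvd) hsum
  have hu : fderiv ℝ G 0 u = 0 := by
    simpa [c, deriv_comp_smul_const (hG₂.differentiable two_ne_zero)] using
      hc (.inl ⟨1, by omega⟩) (by simp)
  have huu : fderiv ℝ (fderiv ℝ G) 0 u u = 0 := by
    simpa [c, iteratedDeriv_two_comp_smul_const hG₂] using
      hc (.inl ⟨2, by omega⟩) (by simp only [Sum.elim_inl]; omega)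
  exact ⟨hu, hc (.inr 0) (by simp), huu, hc (.inr 1) (by simp)⟩

end HasThreeTermJet

end Asymptotics

section LevelSets

theorem surjective_pi_of_linearIndependent {K V ι : Type*} [Field K] [AddCommGroup V] [Module K V]
    [Finite ι] {A : ι → Module.Dual K V} (hA : LinearIndependent K A) :
    Surjective (LinearMap.pi A) := by
  classical
  cases nonempty_fintype ι
  rw [← LinearMap.range_eq_top]
  by_contra hne
  obtain ⟨g, hg, hker⟩ := Submodule.exists_le_ker_of_lt_top _ (lt_top_iff_ne_top.2 hne)
  have hcomb : ∑ i, g (Pi.single i 1) • A i = 0 := by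
    ext x
    have hgx : g (LinearMap.pi A x) = 0 := hker ⟨x, rfl⟩
    rw [LinearMap.pi_apply_eq_sum_univ] at hgx
    simpa [mul_comm, ← Pi.single_apply, Pi.single_comm] using hgx
  refine hg (LinearMap.pi_ext' fun i => LinearMap.ext_ring ?_)
  simpa using Fintype.linearIndependent_iff.1 hA _ hcomb i

variable {E F W : Type*} [NormedAddCommGroup E] [NormedSpace ℝ E] [CompleteSpace E]
  [NormedAddCommGroup F] [NormedSpace ℝ F] [FiniteDimensional ℝ F]
  [NormedAddCommGroup W] [NormedSpace ℝ W]

theorem exists_curve_in_fiber {G : E → F} {G' : E →L[ℝ] F} {x₀ c : E}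
    (hG : HasStrictFDerivAt G G' x₀) (hsurj : Surjective G') (hc : G' c = 0) :
    ∃ γ : ℝ → E, γ 0 = x₀ ∧ HasDerivAt γ c 0 ∧ ∀ᶠ s in 𝓝 0, G (γ s) = G x₀ := by
  have hrange : G'.range = ⊤ := LinearMap.range_eq_top.2 hsurj
  let k : G'.ker := ⟨c, hc⟩
  have hline : HasDerivAt (fun s : ℝ => s • k) k 0 := by
    simpa using (hasDerivAt_id (0 : ℝ)).smul_const k
  refine ⟨fun s => hG.implicitFunction G G' hrange (G x₀) (s • k), by simp, ?_, ?_⟩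
  · have himpl : HasFDerivAt (hG.implicitFunction G G' hrange (G x₀)) G'.ker.subtypeL
        ((0 : ℝ) • k) := by
      simpa using (hG.to_implicitFunction hrange).hasFDerivAt
    simpa [k] using! himpl.comp_hasDerivAt (0 : ℝ) hline
  · have hlim : Tendsto (fun s : ℝ => (G x₀, s • k)) (𝓝 0) (𝓝 (G x₀, 0)) := by
      simpa using tendsto_const_nhds.prodMk_nhds hline.continuousAt.tendsto
    exact hlim.eventually (hG.map_implicitFunction_eq hrange)

theorem exists_curve_of_tangent_pairs {G : E → F} {x₀ c a b a' b' : E} (hG : ContDiffAt ℝ 2 G x₀)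
    (hsurj : Surjective (fderiv ℝ G x₀)) (hc : fderiv ℝ G x₀ c = 0)
    (ha : fderiv ℝ G x₀ a = 0) (hb : fderiv ℝ G x₀ b = 0)
    (ha' : fderiv ℝ (fderiv ℝ G) x₀ c a + fderiv ℝ G x₀ a' = 0)
    (hb' : fderiv ℝ (fderiv ℝ G) x₀ c b + fderiv ℝ G x₀ b' = 0) :
    ∃ γ : ℝ → E × E × E, γ 0 = (x₀, a, b) ∧ HasDerivAt γ (c, a', b') 0 ∧
      ∀ᶠ s in 𝓝 0, G (γ s).1 = G x₀ ∧ fderiv ℝ G (γ s).1 (γ s).2.1 = 0 ∧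
        fderiv ℝ G (γ s).1 (γ s).2.2 = 0 := by
  have hDG : HasStrictFDerivAt (fderiv ℝ G) (fderiv ℝ (fderiv ℝ G) x₀) x₀ :=
    (hG.fderiv_right (m := 1) one_add_one_eq_two.le).hasStrictFDerivAt one_ne_zero
  have hfst : HasStrictFDerivAt (Prod.fst : E × E × E → E) (.fst ℝ E (E × E)) (x₀, a, b) :=
    hasStrictFDerivAt_fst
  have hsnd : HasStrictFDerivAt (Prod.snd : E × E × E → E × E) (.snd ℝ E (E × E)) (x₀, a, b) :=
    hasStrictFDerivAt_snd
  -- The implicit function theorem is applied to `(x, y, z) ↦ (G x, DG(x) y, DG(x) z)`.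
  have hΨ := ((hG.hasStrictFDerivAt two_ne_zero).comp (x₀, a, b) hfst).prodMk
    (((hDG.comp (x₀, a, b) hfst).clm_apply hsnd.fst).prodMk
      ((hDG.comp (x₀, a, b) hfst).clm_apply hsnd.snd))
  obtain ⟨γ, hγ₀, hγ', hγ⟩ := exists_curve_in_fiber (c := (c, a', b')) hΨ
    (by
      rintro ⟨y, y₁, y₂⟩
      obtain ⟨x, rfl⟩ := hsurj y
      obtain ⟨x₁, hx₁⟩ := hsurj (y₁ - fderiv ℝ (fderiv ℝ G) x₀ x a)
      obtain ⟨x₂, hx₂⟩ := hsurj (y₂ - fderiv ℝ (fderiv ℝ G) x₀ x b)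
      exact ⟨(x, x₁, x₂), by simp [hx₁, hx₂]⟩)
    (by simp [hc, add_comm (fderiv ℝ G x₀ _), ha', hb'])
  refine ⟨γ, hγ₀, hγ', hγ.mono fun s hs => ?_⟩
  simpa [ha, hb] using hs

theorem isotropic_apply_add_apply_eq_zero {G : E → F} {x₀ c a b a' b' : E}
    {ω : E →L[ℝ] E →L[ℝ] W} (hG : ContDiffAt ℝ 2 G x₀) (hsurj : Surjective (fderiv ℝ G x₀))
    (hω : ∀ᶠ x in 𝓝 x₀, G x = G x₀ →
      ∀ u v, fderiv ℝ G x u = 0 → fderiv ℝ G x v = 0 → ω u v = 0)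
    (hc : fderiv ℝ G x₀ c = 0) (ha : fderiv ℝ G x₀ a = 0) (hb : fderiv ℝ G x₀ b = 0)
    (ha' : fderiv ℝ (fderiv ℝ G) x₀ c a + fderiv ℝ G x₀ a' = 0)
    (hb' : fderiv ℝ (fderiv ℝ G) x₀ c b + fderiv ℝ G x₀ b' = 0) :
    ω a' b + ω a b' = 0 := by
  obtain ⟨γ, hγ₀, hγ', hγ⟩ := exists_curve_of_tangent_pairs hG hsurj hc ha hb ha' hb'
  have hbase : Tendsto (fun s => (γ s).1) (𝓝 0) (𝓝 x₀) := by
    simpa [hγ₀] using hγ'.continuousAt.tendsto.fst_nhds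
  have hzero : (fun s => ω (γ s).2.1 (γ s).2.2) =ᶠ[𝓝 0] fun _ => 0 := by
    filter_upwards [hγ, hbase.eventually hω] with s ⟨hfib, hu, hv⟩ hs
    exact hs hfib _ _ hu hv
  have hderiv : HasDerivAt (fun s => ω (γ s).2.1 (γ s).2.2) (ω a' b + ω a b') 0 := by
    have h₂ := hγ'.snd
    simpa [hγ₀] using (ω.hasFDerivAt.comp_hasDerivAt 0 h₂.fst).clm_apply h₂.snd
  exact (hderiv.congr_of_eventuallyEq hzero.symm).unique (hasDerivAt_const 0 0)

end LevelSets

section VanishOrder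

theorem le_vanishOrder_iff {g : ℝ → ℝ} {k : ℕ} :
    (k : ℕ∞) ≤ vanishOrder g ↔ ∀ m, 1 ≤ m → m < k → iteratedDeriv m g 0 = 0 := by
  rw [vanishOrder, le_sInf_iff]
  constructor
  · intro hk m hm hmk
    by_contra hne
    exact hmk.not_ge (Nat.cast_le.1 (hk m ⟨m, rfl, hm, hne⟩))
  · rintro hk _ ⟨m, rfl, hm, hne⟩
    exact Nat.cast_le.2 (not_lt.1 fun hmk => hne (hk m hm hmk))

theorem add_one_le_vanishOrder_iff_isLittleO {g : ℝ → ℝ} {k : ℕ} (hg : ContDiff ℝ k g)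
    (hg₀ : g 0 = 0) : (k : ℕ∞) + 1 ≤ vanishOrder g ↔ g =o[𝓝 0] fun t => t ^ k := by
  have hTaylor := sub_taylor_sum_isLittleO hg
  rw [← Nat.cast_add_one, le_vanishOrder_iff]
  constructor
  · intro hzero
    refine hTaylor.congr_left fun t => ?_
    rw [Finset.sum_eq_zero, sub_zero]
    rintro ⟨_ | m, hm⟩ -
    · simp [hg₀]
    · simp [hzero (m + 1) m.succ_pos hm]
  · intro ho m _ hm
    have hsum := (ho.sub hTaylor).congr_left fun t => sub_sub_cancel _ _
    simpa [Nat.factorial_ne_zero] using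
      eq_zero_of_sum_pow_smul_isLittleO Fin.val_injective hsum ⟨m, hm⟩ (Nat.lt_succ_iff.1 hm)

end VanishOrder

section StandardSymplecticForm

variable {n : ℕ}

/-- The index of the coordinate `pᵢ` of `ℝ^{2n}`, with `i` counted from `0`. -/
def pIdx (i : Fin n) : Fin (2 * n) := ⟨2 * i, by omega⟩

/-- The index of the coordinate `qᵢ` of `ℝ^{2n}`, with `i` counted from `0`. -/
def qIdx (i : Fin n) : Fin (2 * n) := ⟨2 * i + 1, by omega⟩

theorem qIdx_injective : Injective (qIdx (n := n)) := fun i j hij =>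
  Fin.ext (by simpa [qIdx] using hij)

theorem pIdx_injective : Injective (pIdx (n := n)) := fun i j hij =>
  Fin.ext (by simpa [pIdx] using hij)

theorem pIdx_ne_qIdx (i j : Fin n) : pIdx i ≠ qIdx j := fun hij => by
  simp only [pIdx, qIdx, Fin.mk.injEq] at hij
  omega

theorem stdSymp_eq_sum (u v : Fin (2 * n) → ℝ) :
    stdSymp n u v = ∑ i, (u (pIdx i) * v (qIdx i) - u (qIdx i) * v (pIdx i)) :=
  rfl

theorem single_pIdx_apply_qIdx (i j : Fin n) :
    (Pi.single (pIdx i) 1 : Fin (2 * n) → ℝ) (qIdx j) = 0 :=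
  Pi.single_eq_of_ne (pIdx_ne_qIdx i j).symm 1

theorem stdSymp_single_pIdx (i : Fin n) (v : Fin (2 * n) → ℝ) :
    stdSymp n (Pi.single (pIdx i) 1) v = v (qIdx i) := by
  simp [stdSymp_eq_sum, Pi.single_apply, pIdx_injective.eq_iff, (pIdx_ne_qIdx _ _).symm]

variable (n) in
/-- The standard symplectic form as a continuous bilinear map, so that it can be differentiated
along curves. -/
def stdSympL : (Fin (2 * n) → ℝ) →L[ℝ] (Fin (2 * n) → ℝ) →L[ℝ] ℝ :=
  (LinearMap.mk₂ ℝ (stdSymp n)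
    (fun u u' v => by
      simp only [stdSymp_eq_sum, Pi.add_apply, ← Finset.sum_add_distrib]
      congr! 1; ring)
    (fun c u v => by
      simp only [stdSymp_eq_sum, Pi.smul_apply, smul_eq_mul, Finset.mul_sum]
      congr! 1; ring)
    (fun u v v' => by
      simp only [stdSymp_eq_sum, Pi.add_apply, ← Finset.sum_add_distrib]
      congr! 1; ring)
    (fun c u v => by
      simp only [stdSymp_eq_sum, Pi.smul_apply, smul_eq_mul, Finset.mul_sum]
      congr! 1; ring)).toContinuousBilinearMap

theorem stdSympL_apply (u v : Fin (2 * n) → ℝ) : stdSympL n u v = stdSymp n u v := rfl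

end StandardSymplecticForm

namespace LagrangianGerm

variable {n : ℕ}

/-- The map `H = (H₁, …, Hₙ)` whose zero fibre is the Lagrangian germ, bundling the defining
functions for the implicit function theorem. -/
def toMap (L : LagrangianGerm n) (x : Fin (2 * n) → ℝ) : Fin n → ℝ := fun i => L.H i x

theorem contDiff_toMap (L : LagrangianGerm n) : ContDiff ℝ (⊤ : ℕ∞) L.toMap :=
  contDiff_pi.2 L.smooth

theorem toMap_zero (L : LagrangianGerm n) : L.toMap 0 = 0 :=
  funext L.zero_at_zero

theorem fderiv_toMap (L : LagrangianGerm n) (x : Fin (2 * n) → ℝ) :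
    fderiv ℝ L.toMap x = .pi fun i => fderiv ℝ (L.H i) x :=
  fderiv_pi fun i => (L.smooth i).differentiable (by simp) x

theorem fderiv_toMap_eq_zero_iff (L : LagrangianGerm n) {x u : Fin (2 * n) → ℝ} :
    fderiv ℝ L.toMap x u = 0 ↔ ∀ i, fderiv ℝ (L.H i) x u = 0 := by
  rw [fderiv_toMap, funext_iff]
  rfl

theorem surjective_fderiv_toMap_zero (L : LagrangianGerm n) :
    Surjective (fderiv ℝ L.toMap 0) := by
  obtain ⟨U, -, hU₀, hU⟩ := L.lagrangian
  have hli := (hU 0 hU₀ L.zero_at_zero).1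
  rw [fderiv_toMap]
  exact surjective_pi_of_linearIndependent
    (hli.map' (ContinuousLinearMap.coeLM ℝ)
      (LinearMap.ker_eq_bot.2 ContinuousLinearMap.coe_injective))

theorem eventually_stdSymp_eq_zero (L : LagrangianGerm n) :
    ∀ᶠ x in 𝓝 0, L.toMap x = L.toMap 0 →
      ∀ u v, fderiv ℝ L.toMap x u = 0 → fderiv ℝ L.toMap x v = 0 → stdSymp n u v = 0 := by
  obtain ⟨U, hUo, hU₀, hU⟩ := L.lagrangian
  filter_upwards [hUo.mem_nhds hU₀] with x hx hLx u v hu hv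
  rw [toMap_zero] at hLx
  exact (hU x hx (congrFun hLx)).2 u v (L.fderiv_toMap_eq_zero_iff.1 hu)
    (L.fderiv_toMap_eq_zero_iff.1 hv)

theorem tOrd_le_add (L : LagrangianGerm n) {f : ℝ → Fin (2 * n) → ℝ} {a b : ℕ}
    {u v w : Fin (2 * n) → ℝ} (ha : 0 < a) (hab : a < b) (hdvd : ¬a ∣ b)
    (hf : ContDiff ℝ (a + b : ℕ) f) (hjet : HasThreeTermJet f a b u v w)
    (hω : stdSymp n u w ≠ 0) : tOrd f L ≤ (a + b : ℕ) := by
  by_contra hlt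
  have hcomp : (L.toMap ∘ f) =o[𝓝 0] fun t => t ^ (a + b) := by
    refine isLittleO_pi.2 fun i => ?_
    refine (add_one_le_vanishOrder_iff_isLittleO ?_ ?_).1 ?_
    · exact (contDiff_infty.1 (L.smooth i) _).comp hf
    · simp only [hjet.apply_zero ha (ha.trans hab), comp_apply]
      exact L.zero_at_zero i
    · exact Order.add_one_le_of_lt ((not_le.1 hlt).trans_le (iInf_le _ i))
  obtain ⟨hu, hv, huu, huv⟩ := hjet.fderiv_eq_zero_of_comp_isLittleO ha hab hdvd
    (contDiff_infty.1 L.contDiff_toMap _) hcomp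
  have hsum := isotropic_apply_add_apply_eq_zero (ω := stdSympL n) (a' := 0)
    (contDiff_infty.1 L.contDiff_toMap 2).contDiffAt L.surjective_fderiv_toMap_zero
    L.eventually_stdSymp_eq_zero hu hu hv (by rw [huu, map_zero, add_zero]) huv
  rw [map_zero, zero_apply, zero_add, stdSympL_apply] at hsum
  exact hω hsum

/-- The Lagrangian subspace `q₁ = ⋯ = qₙ = 0`, viewed as a germ; it attains the maximal tangency
order. -/
def momentumSpace (n : ℕ) : LagrangianGerm n where
  H i x := x (qIdx i)
  smooth i := contDiff_apply ℝ ℝ (qIdx i)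
  zero_at_zero _ := rfl
  lagrangian := by
    have hfd : ∀ (i : Fin n) (x : Fin (2 * n) → ℝ),
        fderiv ℝ (fun x : Fin (2 * n) → ℝ => x (qIdx i)) x = .proj (qIdx i) := fun i x =>
      (ContinuousLinearMap.proj (R := ℝ) (φ := fun _ : Fin (2 * n) => ℝ) (qIdx i)).fderiv
    refine ⟨Set.univ, isOpen_univ, trivial, fun x _ _ => ⟨?_, fun u v hu hv => ?_⟩⟩
    · rw [Fintype.linearIndependent_iff]
      intro g hg i
      have hgi := DFunLike.congr_fun hg (Pi.single (qIdx i) (1 : ℝ))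
      simpa [hfd, Pi.single_apply, qIdx_injective.eq_iff] using hgi
    · simp only [hfd, ContinuousLinearMap.proj_apply] at hu hv
      simp [stdSymp_eq_sum, hu, hv]

theorem add_le_tOrd_momentumSpace {f : ℝ → Fin (2 * n) → ℝ} {a b : ℕ}
    {u v w : Fin (2 * n) → ℝ} (ha : 0 < a) (hb : 0 < b) (hf : ContDiff ℝ (a + b : ℕ) f)
    (hjet : HasThreeTermJet f a b u v w) (hu : ∀ i, u (qIdx i) = 0) (hv : ∀ i, v (qIdx i) = 0) :
    ((a + b : ℕ) : ℕ∞) ≤ tOrd f (momentumSpace n) := by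
  obtain ⟨k, hk⟩ : ∃ k, a + b = k + 1 := ⟨a + b - 1, by omega⟩
  refine le_iInf fun i => ?_
  rw [hk, Nat.cast_add_one]
  refine (add_one_le_vanishOrder_iff_isLittleO (g := fun t => f t (qIdx i)) ?_ ?_).2 ?_
  · exact contDiff_pi.1 (hf.of_le (by norm_cast; omega)) (qIdx i)
  · simp [hjet.apply_zero ha hb]
  · have hq := (isLittleO_pi.1 hjet (qIdx i)).isBigO.add
      (pow_smul_const_isBigO (a + b) (w (qIdx i)))
    rw [hk] at hq
    refine (hq.trans_isLittleO (isLittleO_pow_pow k.lt_succ_self)).congr_left fun t => ?_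
    simp [hu, hv]

end LagrangianGerm

theorem semigroup_3_7_11_class1_lagrangian_tangency_order_general {n a b : ℕ}
    {f : ℝ → Fin (2 * n) → ℝ} {u v w : Fin (2 * n) → ℝ} (ha : 0 < a) (hab : a < b)
    (hdvd : ¬a ∣ b) (hf : ContDiff ℝ (a + b : ℕ) f) (hjet : HasThreeTermJet f a b u v w)
    (hu : ∀ i, u (qIdx i) = 0) (hv : ∀ i, v (qIdx i) = 0) (hω : stdSymp n u w ≠ 0) :
    Lt1 f = (a + b : ℕ) :=
  le_antisymm (iSup_le fun L => L.tOrd_le_add ha hab hdvd hf hjet hω) <|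
    (LagrangianGerm.add_le_tOrd_momentumSpace ha (ha.trans hab) hf hjet hu hv).trans
      (le_iSup (tOrd f) (LagrangianGerm.momentumSpace n))

/-- The curve-germ `t ↦ (t³, t¹⁰, t⁷, 0, t¹¹, 0, …, 0)` with semigroup `(3, 7, 11)`, written in the
coordinate basis of `ℝ^{2n}`. -/
def semigroupCurve {n : ℕ} (hn : 3 ≤ n) (t : ℝ) : Fin (2 * n) → ℝ :=
  t ^ 3 • Pi.single (pIdx ⟨0, by omega⟩) 1 + t ^ 7 • Pi.single (pIdx ⟨1, by omega⟩) 1 +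
    t ^ 10 • Pi.single (qIdx ⟨0, by omega⟩) 1 + t ^ 11 • Pi.single (pIdx ⟨2, by omega⟩) 1

theorem semigroupCurve_eq_ite {n : ℕ} (hn : 3 ≤ n) :
    semigroupCurve hn = fun t (j : Fin (2 * n)) =>
      if (j : ℕ) = 0 then t ^ 3 else if (j : ℕ) = 1 then t ^ 10
      else if (j : ℕ) = 2 then t ^ 7 else if (j : ℕ) = 4 then t ^ 11 else 0 := by
  ext t ⟨j, hj⟩
  simp only [semigroupCurve, pIdx, qIdx, Pi.add_apply, Pi.smul_apply, Pi.single_apply,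
    Fin.mk.injEq, smul_eq_mul]
  split_ifs <;> first | omega | simp

theorem contDiff_semigroupCurve {n : ℕ} (hn : 3 ≤ n) {k : WithTop ℕ∞} :
    ContDiff ℝ k (semigroupCurve hn) := by
  unfold semigroupCurve
  fun_prop

theorem hasThreeTermJet_semigroupCurve {n : ℕ} (hn : 3 ≤ n) :
    HasThreeTermJet (semigroupCurve hn) 3 7 (Pi.single (pIdx ⟨0, by omega⟩) 1)
      (Pi.single (pIdx ⟨1, by omega⟩) 1) (Pi.single (qIdx ⟨0, by omega⟩) 1) :=
  (pow_smul_const_isLittleO (show 3 + 7 < 11 by norm_num) _).congr_left fun _ =>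
    (add_sub_cancel_left _ _).symm

/-- The Lagrangian tangency order of the symplectic class (1) of the curve-germ with
semigroup `(3,7,11)`. -/
theorem semigroup_3_7_11_class1_lagrangian_tangency_order
    (n : ℕ) (hn : 3 ≤ n)
    (f : ℝ → Fin (2 * n) → ℝ)
    (hf : f = fun (t : ℝ) (j : Fin (2 * n)) => if (j : ℕ) = 0 then t ^ 3 else if (j : ℕ) = 1 then t ^ 10 else if (j : ℕ) = 2 then t ^ 7 else if (j : ℕ) = 4 then t ^ 11 else (0 : ℝ)) :
    Lt1 f = 10 := by
  rw [hf, ← semigroupCurve_eq_ite hn]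
  exact semigroup_3_7_11_class1_lagrangian_tangency_order_general (by norm_num) (by norm_num)
    (by norm_num) (contDiff_semigroupCurve hn) (hasThreeTermJet_semigroupCurve hn)
    (single_pIdx_apply_qIdx _) (single_pIdx_apply_qIdx _) (by simp [stdSymp_single_pIdx])

end
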